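/- The split ıquantum group U = U^ı(sl_{n+1}) satisfies the integral condition (IC): for every word w, the element B_w lies in the ℤ[q, q^{-1}]-span of {B_g : g a good word with g ≼ w}. -/

import Mathlib

/-!
Call a word normal if it is a concatenation of segments `v_a v_{a+1} ⋯ v_{b-1}` that are
lexicographically nonincreasing from left to right.

A word that is not normal reduces integrally, because it has a factor of one of three kinds:
`v_i v_j` with `i + 1 < j`; a segment `v_a ⋯ v_b` followed by the first letters `v_a ⋯ v_{b+1}` of
the next one; a segment `v_a ⋯ v_b` with `a < b` followed by `v_{a+1}`. For each of them the product
of generators is a `ℤ[q, q⁻¹]`-combination of products along `≺`-smaller words. Apart from the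
defining relations this rests on the consequence `u x y x = x u x y - x y x u + y x u x` of two
Serre relations for commuting `u` and `y`, whose coefficients are integers although `q + q⁻¹` has to
be cancelled to obtain it.

A normal word is good. The generators act on the tensor powers of the natural representation, and
for real `q > 0` the matrix coefficients of `B_i` between pure tensors are nonnegative, so that the
coefficient of `B_w` between two of them is nonzero exactly if `w` labels a lattice path from one to
the other. Take the list of starting points and the list of end points of the segments of a normal
word `g`. The sum of the entries has to grow by the length of `g`, so shorter words label no path,
and words of the same length label one only if they are shuffles of the segments of `g`. Among these
shuffles `g` is the lexicographically largest, hence the `≺`-smallest. This matrix coefficient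
therefore vanishes on `B_w` for `w ≺ g` but not on `B_g`. A transcendental real number in place of
`q` makes the argument apply over `ℚ(q)`.

As `≺` is well-founded, repeated reduction ends in an integral combination of products along normal,
hence good, words.
-/

/-- The lexicographic order on words over the alphabet `v_0 < v_1 < ⋯ < v_{n-1}`
(indexed by `Fin n`), in which a word is smaller than any word having it as a proper prefix. -/
def LexLt {n : ℕ} (x y : List (Fin n)) : Prop := List.Lex (· < ·) x y

/-- The order `≺` : `x ≺ y` iff `ℓ(x) < ℓ(y)`, or `ℓ(x) = ℓ(y)` and `x > y` lexicographically. -/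
def PrecLt {n : ℕ} (x y : List (Fin n)) : Prop :=
  x.length < y.length ∨ (x.length = y.length ∧ LexLt y x)

/-- The order `≼` : `x ≼ y` iff `x ≺ y` or `x = y`. -/
def PrecLe {n : ℕ} (x y : List (Fin n)) : Prop := PrecLt x y ∨ x = y

/-- A nonempty word is Lyndon if it is lexicographically strictly smaller than every proper
nonempty suffix of itself. -/
def IsLyndon {n : ℕ} (l : List (Fin n)) : Prop :=
  l ≠ [] ∧ ∀ k : ℕ, 0 < k → k < l.length → LexLt l (l.drop k)

/-- `B_w = b_{i_1} ⋯ b_{i_k} ∈ R` for the word `w = v_{i_1} ⋯ v_{i_k}` (`B_w = 1` for `w = []`). -/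
def Bword {n : ℕ} {R : Type*} [Monoid R] (b : Fin n → R) (w : List (Fin n)) : R :=
  (w.map b).prod

/-- A word `g` is good if `B_g` does not lie in the `K`-linear span of the `B_w` with `w ≺ g`. -/
def IsGood (K : Type*) {n : ℕ} {R : Type*} [Field K] [Ring R] [Algebra K R]
    (b : Fin n → R) (g : List (Fin n)) : Prop :=
  Bword b g ∉ Submodule.span K (Bword b '' {w | PrecLt w g})

/-- The defining relations of the split ıquantum group `U^ı(sl_{n+1})` of type `A_n` with
parameters `ξ_i = q⁻¹` : `B_iB_j = B_jB_i` for `|i-j| ≥ 2` and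
`B_i²B_j - (q+q⁻¹) B_iB_jB_i + B_jB_i² = B_j` for `|i-j| = 1`. -/
inductive UiRel (n : ℕ) :
    FreeAlgebra (RatFunc ℚ) (Fin n) → FreeAlgebra (RatFunc ℚ) (Fin n) → Prop
  | comm (i j : Fin n) (h : (i : ℕ) + 1 < (j : ℕ)) :
      UiRel n (FreeAlgebra.ι (RatFunc ℚ) i * FreeAlgebra.ι (RatFunc ℚ) j)
        (FreeAlgebra.ι (RatFunc ℚ) j * FreeAlgebra.ι (RatFunc ℚ) i)
  | serre (i j : Fin n) (h : (i : ℕ) + 1 = (j : ℕ) ∨ (j : ℕ) + 1 = (i : ℕ)) :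
      UiRel n
        (FreeAlgebra.ι (RatFunc ℚ) i * FreeAlgebra.ι (RatFunc ℚ) i * FreeAlgebra.ι (RatFunc ℚ) j +
          FreeAlgebra.ι (RatFunc ℚ) j * FreeAlgebra.ι (RatFunc ℚ) i * FreeAlgebra.ι (RatFunc ℚ) i)
        (((RatFunc.X : RatFunc ℚ) + (RatFunc.X : RatFunc ℚ)⁻¹) • (FreeAlgebra.ι (RatFunc ℚ) i *
            FreeAlgebra.ι (RatFunc ℚ) j * FreeAlgebra.ι (RatFunc ℚ) i) +
          FreeAlgebra.ι (RatFunc ℚ) j)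

/-- The split ıquantum group `U = U^ı(sl_{n+1})` of type `A_n`, the quotient of the free
`ℚ(q)`-algebra on `B_1, …, B_n` by the defining relations. -/
abbrev Ui (n : ℕ) := RingQuot (UiRel n)

/-- The generators `B_1, …, B_n` of `U^ı(sl_{n+1})`. -/
noncomputable def Bgen (n : ℕ) (i : Fin n) : Ui n :=
  RingQuot.mkAlgHom (RatFunc ℚ) (UiRel n) (FreeAlgebra.ι (RatFunc ℚ) i)

/-- The words of the form `v_a v_{a+1} ⋯ v_b` : nonempty words with consecutive increasing
letters. -/
def IsSegment {n : ℕ} (l : List (Fin n)) : Prop :=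
  l ≠ [] ∧ l.Chain' (fun x y : Fin n => (y : ℕ) = (x : ℕ) + 1)

/-- The subring `ℤ[q, q⁻¹]` of `ℚ(q)`. -/
noncomputable def LaurentInt : Subring (RatFunc ℚ) :=
  Subring.closure {RatFunc.X, (RatFunc.X)⁻¹}

/-- A word `w` is integral if `B_w` is a `ℤ[q,q⁻¹]`-linear combination of the `B_g` with `g` a
good word satisfying `g ≼ w`. -/
def IsIntegralWord {n : ℕ} {R : Type*} [Ring R] [Algebra (RatFunc ℚ) R]
    (b : Fin n → R) (w : List (Fin n)) : Prop :=
  ∃ (s : Finset (List (Fin n))) (c : List (Fin n) → RatFunc ℚ),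
    (∀ g ∈ s, IsGood (RatFunc ℚ) b g ∧ PrecLe g w) ∧ (∀ g ∈ s, c g ∈ LaurentInt) ∧
    Bword b w = ∑ g ∈ s, c g • Bword b g

namespace Ui

/-! ### The order `≺` on words -/

section Words

variable {α α' : Type*}

/-- The order `≺` over an arbitrary alphabet; for `Fin n` it is definitionally `PrecLt`. -/
def Prec [LT α] (x y : List α) : Prop :=
  x.length < y.length ∨ (x.length = y.length ∧ y < x)

theorem lt_append_of_lt_of_length_eq [LT α] {u v : List α} (h : u < v)
    (hl : u.length = v.length) (r s : List α) : u ++ r < v ++ s := by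
  induction h with
  | nil => simp at hl
  | rel h => exact List.Lex.rel h
  | cons _ ih => exact List.Lex.cons (ih (by simpa using hl))

theorem strictMono_map [LinearOrder α] [LinearOrder α'] {f : α → α'} (hf : StrictMono f) :
    StrictMono (List.map f) := by
  intro u v h
  induction h with
  | nil => exact List.Lex.nil
  | rel h => exact List.Lex.rel (hf h)
  | cons _ ih => exact List.Lex.cons ih

theorem prec_map_iff [LinearOrder α] [LinearOrder α'] {f : α → α'} (hf : StrictMono f)
    {u v : List α} : Prec (u.map f) (v.map f) ↔ Prec u v := by
  simp only [Prec, List.length_map, (strictMono_map hf).lt_iff_lt]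

theorem Prec.trans [LinearOrder α] {u v w : List α} (huv : Prec u v) (hvw : Prec v w) :
    Prec u w := by
  rcases huv with huv | ⟨huv, hlt⟩ <;> rcases hvw with hvw | ⟨hvw, hlt'⟩
  · exact .inl (huv.trans hvw)
  · exact .inl (hvw ▸ huv)
  · exact .inl (huv ▸ hvw)
  · exact .inr ⟨huv.trans hvw, hlt'.trans hlt⟩

theorem Prec.append [LinearOrder α] {u v : List α} (h : Prec u v) (x y : List α) :
    Prec (x ++ u ++ y) (x ++ v ++ y) := by
  rcases h with h | ⟨hl, hlt⟩
  · exact .inl (by simpa using h)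
  · refine .inr ⟨by simp [hl], lt_append_of_lt_of_length_eq ?_ (by simp [hl]) y y⟩
    exact List.append_left_lt hlt

theorem Prec.shortlex [LT α] {u v : List α} (h : Prec u v) : List.Shortlex (· > ·) u v := by
  rcases h with h | ⟨hl, hlt⟩
  · exact List.Shortlex.of_length_lt h
  refine List.Shortlex.of_lex hl ?_
  induction hlt with
  | nil => simp at hl
  | rel h => exact List.Lex.rel h
  | cons _ ih => exact List.Lex.cons (ih (by simpa using hl))

theorem wellFounded_prec [LT α] [WellFoundedGT α] : WellFounded (Prec (α := α)) :=
  Subrelation.wf Prec.shortlex (List.Shortlex.wf wellFounded_gt)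

end Words

/-! ### Reducible words -/

theorem mem_span_image_of_wellFounded {ι A M : Type*} [Semiring A] [AddCommMonoid M] [Module A M]
    {r : ι → ι → Prop} (hwf : WellFounded r) (htrans : ∀ {x y z}, r x y → r y z → r x z)
    {b : ι → M} {P : ι → Prop} (h : ∀ w, b w ∈ Submodule.span A (b '' {u | r u w}) ∨ P w)
    (w : ι) : b w ∈ Submodule.span A (b '' {g | P g ∧ (r g w ∨ g = w)}) := by
  induction w using hwf.induction with
  | _ w ih =>
    rcases h w with hw | hw
    · refine Submodule.span_le.2 ?_ hw
      rintro _ ⟨u, hu, rfl⟩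
      refine Submodule.span_mono (Set.image_mono ?_) (ih u hu)
      rintro g ⟨hg, hgu | rfl⟩
      · exact ⟨hg, .inl (htrans hgu hu)⟩
      · exact ⟨hg, .inl hu⟩
    · exact Submodule.subset_span ⟨w, ⟨hw, .inr rfl⟩, rfl⟩

section Serre

variable {A R : Type*} [CommRing A] [Ring R] [Algebra A R] {d : A} {u x y : R}

/-- The Serre relation of `U^ı` between `x = B_i` and `y = B_j` for `|i - j| = 1`, where `d` stands
for `q + q⁻¹`. -/
def SerreRel (d : A) (x y : R) : Prop :=
  x * x * y + y * x * x = d • (x * y * x) + y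

theorem SerreRel.mul_left (h : SerreRel d x y) (hxu : Commute x u) : SerreRel d x (u * y) := by
  have hu := congrArg (u * ·) h
  simp only [mul_add, mul_smul_comm, ← mul_assoc, ← hxu.eq] at hu
  simpa only [SerreRel, mul_assoc, hxu.left_comm] using hu

/-- Multiplying the two Serre relations by `u` and by `y` on either side makes all other terms
cancel in pairs; what is left is divisible by `d`. -/
theorem SerreRel.mul_mul_mul_eq (hd : IsSMulRegular R d) (hxy : SerreRel d x y)
    (hxu : SerreRel d x u) (huy : Commute u y) :
    u * x * y * x = x * u * x * y - x * y * x * u + y * x * u * x := by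
  have hu_xy := congrArg (u * ·) hxy
  have hxu_y := congrArg (· * y) hxu
  have hy_xu := congrArg (y * ·) hxu
  have hxy_u := congrArg (· * u) hxy
  simp only [mul_add, add_mul, mul_smul_comm, smul_mul_assoc, mul_assoc, huy.eq,
    huy.left_comm] at hu_xy hxu_y hy_xu hxy_u
  refine hd ?_
  simp only [smul_add, smul_sub, mul_assoc]
  rw [← sub_eq_iff_eq_add] at hu_xy hxu_y hy_xu hxy_u
  rw [← hu_xy, ← hxu_y, ← hy_xu, ← hxy_u]
  abel

theorem SerreRel.mul_self_mul_eq (hd : IsSMulRegular R d) (hxy : SerreRel d x y)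
    (hxu : SerreRel d x u) (huy : Commute u y) :
    u * x * (u * x * y) = u * (u * x) * (y * x) + u * x * y * (x * u) - y * (u * x) * (u * x) := by
  have h := congrArg (u * ·) (hxy.mul_mul_mul_eq hd hxu huy)
  simp only [mul_add, mul_sub, mul_assoc, huy.left_comm] at h ⊢
  rw [h]
  abel

end Serre

section Reduction

variable {ι A R : Type*} [CommRing A] [Ring R] [Algebra A R]

/-- The product of a family of ring elements along a word; `Bword` for an arbitrary alphabet. -/
def wordProd (β : ι → R) (w : List ι) : R := (w.map β).prod

theorem wordProd_append (β : ι → R) (u v : List ι) :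
    wordProd β (u ++ v) = wordProd β u * wordProd β v := by
  simp [wordProd]

theorem wordProd_cons (β : ι → R) (i : ι) (w : List ι) :
    wordProd β (i :: w) = β i * wordProd β w := by
  simp [wordProd]

theorem wordProd_singleton (β : ι → R) (i : ι) : wordProd β [i] = β i := by
  simp [wordProd]

theorem commute_wordProd {β : ι → R} {x : R} {w : List ι} (h : ∀ i ∈ w, Commute x (β i)) :
    Commute x (wordProd β w) :=
  Commute.list_prod_right _ _ (by simpa using h)

variable (A) in
/-- The `A`-span of the products of the family along the words in `S`. -/
def wordSpan (β : ι → R) (S : Set (List ι)) : Submodule A R :=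
  Submodule.span A (wordProd β '' S)

theorem wordProd_mem_wordSpan {β : ι → R} {S : Set (List ι)} {w : List ι} (h : w ∈ S) :
    wordProd β w ∈ wordSpan A β S :=
  Submodule.subset_span ⟨w, h, rfl⟩

theorem wordProd_mul_mul_mem {β : ι → R} {S : Set (List ι)} {N : Submodule A R} (x y : List ι)
    (h : ∀ z ∈ S, wordProd β (x ++ z ++ y) ∈ N) {m : R} (hm : m ∈ wordSpan A β S) :
    wordProd β x * m * wordProd β y ∈ N := by
  let mulBoth := LinearMap.mulRight A (wordProd β y) ∘ₗ LinearMap.mulLeft A (wordProd β x)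
  suffices wordSpan A β S ≤ N.comap mulBoth from this hm
  refine Submodule.span_le.2 ?_
  rintro _ ⟨z, hz, rfl⟩
  simpa [mulBoth, wordProd_append, mul_assoc] using h z hz

variable (A) in
/-- The product along `w` is an `A`-linear combination of products along words `≺ w`. -/
def IsReducible [LT ι] (β : ι → R) (w : List ι) : Prop :=
  wordProd β w ∈ wordSpan A β {u | Prec u w}

theorem IsReducible.append [LinearOrder ι] {β : ι → R} {w : List ι} (h : IsReducible A β w)
    (x y : List ι) : IsReducible A β (x ++ w ++ y) := by
  rw [IsReducible, wordProd_append, wordProd_append]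
  exact wordProd_mul_mul_mem x y (fun z hz => wordProd_mem_wordSpan (hz.append x y)) h

/-- The elements `β 0, …, β (n - 1)` satisfy the defining relations of `U^ı(sl_{n+1})`, with `d` in
place of `q + q⁻¹`. The family is indexed by `ℕ` so that words can be written with intervals of
natural numbers; its members with index `≥ n` are unconstrained. -/
structure IsUiFamily (d : A) (n : ℕ) (β : ℕ → R) : Prop where
  commute {i j : ℕ} (hij : i + 1 < j) (hj : j < n) : Commute (β i) (β j)
  serre {i j : ℕ} (hi : i < n) (hj : j < n) (hij : i + 1 = j ∨ j + 1 = i) :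
    SerreRel d (β i) (β j)

namespace IsUiFamily

variable {d : A} {n : ℕ} {β : ℕ → R}

theorem commute_wordProd (hβ : IsUiFamily d n β) {j : ℕ} (hj : j < n) {s : List ℕ}
    (hs : ∀ c ∈ s, c + 1 < j ∨ (j + 1 < c ∧ c < n)) : Commute (β j) (wordProd β s) :=
  Ui.commute_wordProd fun c hc => (hs c hc).elim
    (fun h => (hβ.commute h hj).symm) fun h => hβ.commute h.1 h.2

theorem serreRel_segment (hβ : IsUiFamily d n β) {a b : ℕ} (hab : a < b) (hb : b < n) :
    SerreRel d (β b) (wordProd β (List.Ico a b)) := by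
  obtain ⟨b, rfl⟩ := Nat.exists_eq_add_one_of_ne_zero (Nat.ne_zero_of_lt hab)
  rw [List.Ico.succ_top (by omega), wordProd_append, wordProd_singleton]
  refine (hβ.serre hb (by omega) (.inr rfl)).mul_left (hβ.commute_wordProd hb fun c hc => ?_)
  have := List.Ico.mem.1 hc
  omega

theorem isReducible_pair (hβ : IsUiFamily d n β) {i j : ℕ} (hij : i + 1 < j) (hj : j < n) :
    IsReducible A β [i, j] := by
  have : wordProd β [i, j] = wordProd β [j, i] := by
    simpa [wordProd] using (hβ.commute hij hj).eq
  rw [IsReducible, this]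
  exact wordProd_mem_wordSpan (.inr ⟨rfl, List.Lex.rel (by omega)⟩)

end IsUiFamily

/-- The words that occur in the reduction of the segments `a, …, b - 1` and `a, …, b` written one
after the other. The bound on the letters of `s` is what allows the induction on `b` to move
`β (b + 1)` past `s`. -/
def segmentPairWords (a b : ℕ) : Set (List ℕ) :=
  {z | z.length ≤ 2 * (b - a) + 1 ∧
    ((∃ c ∈ z.head?, a < c) ∨ ∃ s, z = List.Ico a (b + 1) ++ s ∧ ∀ c ∈ s, c < b)}

theorem prec_of_mem_segmentPairWords {a b : ℕ} (hab : a < b) {z : List ℕ}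
    (hz : z ∈ segmentPairWords a b) : Prec z (List.Ico a b ++ List.Ico a (b + 1)) := by
  have hlen : (List.Ico a b ++ List.Ico a (b + 1)).length = 2 * (b - a) + 1 := by
    simp only [List.length_append, List.Ico.length]
    omega
  obtain ⟨hl, hz⟩ := hz
  rcases hl.lt_or_eq with hl | hl
  · exact .inl (hl.trans_eq hlen.symm)
  refine .inr ⟨hl.trans hlen.symm, ?_⟩
  rcases hz with ⟨c, hc, hac⟩ | ⟨s, rfl, -⟩
  · obtain ⟨z, rfl⟩ := List.head?_eq_some_iff.1 hc
    rw [List.Ico.eq_cons hab]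
    exact List.Lex.rel hac
  · rw [List.Ico.succ_top hab.le, List.append_assoc]
    refine List.append_left_lt ?_
    rw [← List.Ico.succ_top hab.le, List.Ico.eq_cons (by omega)]
    exact List.Lex.rel hab

namespace IsUiFamily

variable {d : A} {n : ℕ} {β : ℕ → R}

theorem wordProd_append_mem_segmentPair (hβ : IsUiFamily d n β) {a b : ℕ} (hab : a < b)
    (hb : b + 1 < n) {z : List ℕ} (hz : z ∈ segmentPairWords a b) :
    wordProd β (z ++ [b + 1, b]) ∈ wordSpan A β (segmentPairWords a (b + 1)) := by
  obtain ⟨hl, ⟨c, hc, hac⟩ | ⟨s, rfl, hs⟩⟩ := hz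
  · refine wordProd_mem_wordSpan ⟨?_, .inl ⟨c, by simp [Option.mem_def.1 hc], hac⟩⟩
    simp only [List.length_append, List.length_cons, List.length_nil]
    omega
  · have hcomm : Commute (β (b + 1)) (wordProd β s) :=
      hβ.commute_wordProd hb fun c hc => .inl (by have := hs c hc; omega)
    have : wordProd β (List.Ico a (b + 1) ++ s ++ [b + 1, b]) =
        wordProd β (List.Ico a (b + 1 + 1) ++ (s ++ [b])) := by
      rw [List.Ico.succ_top (by omega : a ≤ b + 1)]
      simpa [wordProd, mul_assoc] using
        congrArg (wordProd β (List.Ico a (b + 1)) * · * β b) hcomm.eq.symm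
    rw [this]
    refine wordProd_mem_wordSpan ⟨?_, .inr ⟨_, rfl, ?_⟩⟩
    · simp only [List.length_append, List.Ico.length, List.length_cons, List.length_nil] at hl ⊢
      omega
    · simp only [List.mem_append, List.mem_singleton]
      rintro c (hc | rfl)
      · exact (hs c hc).trans (Nat.lt_succ_self b)
      · exact Nat.lt_succ_self c

theorem wordProd_segmentPair_succ (hβ : IsUiFamily d n β) (hd : IsSMulRegular R d) {a b : ℕ}
    (hab : a < b) (hb : b + 1 < n) :
    wordProd β (List.Ico a (b + 1) ++ List.Ico a (b + 1 + 1)) =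
      wordProd β [] * wordProd β (List.Ico a b ++ List.Ico a (b + 1)) * wordProd β [b + 1, b] +
      wordProd β (List.Ico a (b + 1 + 1) ++ (b :: List.Ico a b)) -
      wordProd β ((b + 1) :: (List.Ico a (b + 1) ++ List.Ico a (b + 1))) := by
  have hcomm : Commute (β (b + 1)) (wordProd β (List.Ico a b)) :=
    hβ.commute_wordProd hb fun c hc => by have := List.Ico.mem.1 hc; omega
  have key := (hβ.serre (by omega) hb (.inl rfl)).mul_self_mul_eq hd
    (hβ.serreRel_segment hab (by omega)) hcomm.symm
  rw [List.Ico.succ_top (by omega : a ≤ b + 1), List.Ico.succ_top hab.le]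
  simpa [wordProd, mul_assoc] using key

theorem wordProd_segmentPair_mem (hβ : IsUiFamily d n β) (hd : IsSMulRegular R d) {a b : ℕ}
    (hab : a < b) (hb : b < n) :
    wordProd β (List.Ico a b ++ List.Ico a (b + 1)) ∈ wordSpan A β (segmentPairWords a b) := by
  induction b, hab using Nat.le_induction with
  | base =>
    have hserre : wordProd β [a, a, a + 1] =
        d • wordProd β [a, a + 1, a] + wordProd β [a + 1] - wordProd β [a + 1, a, a] := by
      rw [eq_sub_iff_add_eq]
      simpa [wordProd, mul_assoc, SerreRel] using hβ.serre (by omega) hb (.inl rfl)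
    have hI : List.Ico a (a + 1 + 1) = [a, a + 1] := by
      rw [List.Ico.succ_top (by omega), List.Ico.succ_singleton, List.singleton_append]
    rw [List.Ico.succ_singleton, hI, List.singleton_append, hserre]
    refine sub_mem (add_mem (Submodule.smul_mem _ _ ?_) ?_) ?_ <;>
      refine wordProd_mem_wordSpan ⟨by simp, ?_⟩
    · exact .inr ⟨[a], by rw [hI]; rfl, by simp⟩
    · exact .inl ⟨a + 1, rfl, by omega⟩
    · exact .inl ⟨a + 1, rfl, by omega⟩
  | succ b hab ih =>
    have hab : a < b := hab
    rw [hβ.wordProd_segmentPair_succ hd hab hb]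
    refine sub_mem (add_mem ?_ (wordProd_mem_wordSpan ⟨?_, .inr ⟨_, rfl, ?_⟩⟩))
      (wordProd_mem_wordSpan ⟨?_, .inl ⟨b + 1, rfl, by omega⟩⟩)
    · exact wordProd_mul_mul_mem _ _
        (fun z hz => hβ.wordProd_append_mem_segmentPair hab hb hz) (ih (by omega))
    · simp only [List.length_append, List.length_cons, List.Ico.length]
      omega
    · simp only [List.mem_cons, List.Ico.mem]
      omega
    · simp only [List.length_append, List.length_cons, List.Ico.length]
      omega

theorem isReducible_segment_append_segment (hβ : IsUiFamily d n β) (hd : IsSMulRegular R d)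
    {a b c : ℕ} (hab : a < b) (hbc : b < c) (hc : c ≤ n) :
    IsReducible A β (List.Ico a b ++ List.Ico a c) := by
  have : IsReducible A β (List.Ico a b ++ List.Ico a (b + 1)) :=
    Submodule.span_mono (Set.image_mono fun _ => prec_of_mem_segmentPairWords hab)
      (hβ.wordProd_segmentPair_mem hd hab (by omega))
  simpa [List.Ico.append_consecutive (by omega : a ≤ b + 1) hbc] using
    this.append [] (List.Ico (b + 1) c)

theorem isReducible_segment_append_second (hβ : IsUiFamily d n β) (hd : IsSMulRegular R d)
    {a b : ℕ} (hab : a + 1 < b) (hb : b ≤ n) : IsReducible A β (List.Ico a b ++ [a + 1]) := by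
  rw [List.Ico.eq_cons (by omega : a < b), List.Ico.eq_cons hab]
  rcases Nat.lt_or_ge (a + 1 + 1) b with hb' | hb'
  · set s := List.Ico (a + 1 + 1 + 1) b with hs
    have key := (hβ.serre (by omega) (by omega) (.inl rfl)).mul_mul_mul_eq hd
      (hβ.serre (i := a + 1) (by omega) (by omega) (.inr rfl))
      (hβ.commute (j := a + 1 + 1) (by omega) (by omega))
    have hcomm : Commute (β (a + 1)) (wordProd β s) :=
      hβ.commute_wordProd (by omega) fun c hc => by have := List.Ico.mem.1 hc; omega
    have hred : wordProd β (a :: (a + 1) :: (a + 1 + 1) :: s ++ [a + 1]) =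
        wordProd β ((a + 1) :: a :: (a + 1) :: (a + 1 + 1) :: s)
        - wordProd β ((a + 1) :: (a + 1 + 1) :: (a + 1) :: a :: s)
        + wordProd β ((a + 1 + 1) :: (a + 1) :: a :: (a + 1) :: s) := by
      rw [wordProd_append, wordProd_singleton]
      simp only [wordProd_cons, mul_assoc, ← hcomm.eq]
      simpa only [mul_assoc, add_mul, sub_mul] using congrArg (· * wordProd β s) key
    rw [List.Ico.eq_cons hb', ← hs, IsReducible, hred]
    refine add_mem (sub_mem ?_ ?_) ?_ <;>
      exact wordProd_mem_wordSpan (.inr ⟨by simp, List.Lex.rel (by omega)⟩)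
  · have hserre : wordProd β [a, a + 1, a + 1] =
        d • wordProd β [a + 1, a, a + 1] + wordProd β [a] - wordProd β [a + 1, a + 1, a] := by
      rw [eq_sub_iff_add_eq, add_comm]
      simpa [wordProd, mul_assoc, SerreRel] using
        hβ.serre (i := a + 1) (j := a) (by omega) (by omega) (.inr rfl)
    rw [List.Ico.eq_nil_of_le hb', IsReducible]
    change wordProd β [a, a + 1, a + 1] ∈ _
    rw [hserre]
    refine sub_mem (add_mem (Submodule.smul_mem _ _ ?_) ?_) ?_ <;> apply wordProd_mem_wordSpan
    · exact .inr ⟨rfl, List.Lex.rel (by omega)⟩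
    · exact .inl (by simp)
    · exact .inr ⟨rfl, List.Lex.rel (by omega)⟩

end IsUiFamily

end Reduction

/-! ### Normal words -/

/-- The concatenation of the segments `a, …, b - 1` over the pairs `(a, b)` in the list. -/
def flat (L : List (ℕ × ℕ)) : List ℕ := L.flatMap fun p => List.Ico p.1 p.2

theorem flat_cons (p : ℕ × ℕ) (L : List (ℕ × ℕ)) :
    flat (p :: L) = List.Ico p.1 p.2 ++ flat L := List.flatMap_cons

theorem flat_cons_eq_cons {a b : ℕ} (hab : a < b) (L : List (ℕ × ℕ)) :
    flat ((a, b) :: L) = a :: flat ((a + 1, b) :: L) := by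
  rw [flat_cons, flat_cons, List.Ico.eq_cons hab, List.cons_append]

theorem flat_cons_of_le {a b : ℕ} (hba : b ≤ a) (L : List (ℕ × ℕ)) :
    flat ((a, b) :: L) = flat L := by
  rw [flat_cons, List.Ico.eq_nil_of_le hba, List.nil_append]

theorem flat_cons_succ (i : ℕ) (L : List (ℕ × ℕ)) : flat ((i, i + 1) :: L) = i :: flat L := by
  rw [flat_cons_eq_cons i.lt_succ_self, flat_cons_of_le le_rfl]

/-- A lexicographically nonincreasing list of nonempty segments. In terms of the pairs `(a, b)` that
encode the segments, this is the lexicographic order on `ℕ × ℕ`. -/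
structure IsNormalList (L : List (ℕ × ℕ)) : Prop where
  fst_lt_snd : ∀ p ∈ L, p.1 < p.2
  pairwise : L.Pairwise fun p r => toLex r ≤ toLex p

/-- A word that is a lexicographically nonincreasing concatenation of nonempty segments. These
turn out to be the good words. -/
def IsNormal (w : List ℕ) : Prop := ∃ L, IsNormalList L ∧ flat L = w

theorem isNormalList_nil : IsNormalList [] := ⟨by simp, .nil⟩

theorem IsNormalList.cons {L : List (ℕ × ℕ)} (hL : IsNormalList L) {p : ℕ × ℕ} (hp : p.1 < p.2)
    (h : ∀ r ∈ L, toLex r ≤ toLex p) : IsNormalList (p :: L) :=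
  ⟨List.forall_mem_cons.2 ⟨hp, hL.fst_lt_snd⟩, List.pairwise_cons.2 ⟨h, hL.pairwise⟩⟩

theorem IsNormalList.cons_cons {L : List (ℕ × ℕ)} {p r : ℕ × ℕ} (hL : IsNormalList (r :: L))
    (hp : p.1 < p.2) (h : toLex r ≤ toLex p) : IsNormalList (p :: r :: L) :=
  hL.cons hp <| List.forall_mem_cons.2
    ⟨h, fun _ hs => (List.rel_of_pairwise_cons hL.pairwise hs).trans h⟩

theorem IsNormalList.sublist {L M : List (ℕ × ℕ)} (hL : IsNormalList L) (h : M.Sublist L) :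
    IsNormalList M :=
  ⟨fun p hp => hL.fst_lt_snd p (h.subset hp), hL.pairwise.sublist h⟩

theorem IsNormalList.of_cons {L : List (ℕ × ℕ)} {p : ℕ × ℕ} (hL : IsNormalList (p :: L)) :
    IsNormalList L :=
  hL.sublist (List.sublist_cons_self p L)

theorem IsNormalList.snd_le {L : List (ℕ × ℕ)} (hL : IsNormalList L) {n : ℕ}
    (h : ∀ c ∈ flat L, c < n) {p : ℕ × ℕ} (hp : p ∈ L) : p.2 ≤ n := by
  have hlt := hL.fst_lt_snd p hp
  have := h (p.2 - 1) (List.mem_flatMap.2 ⟨p, hp, List.Ico.mem.2 (by omega)⟩)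
  omega

namespace IsUiFamily

variable {A R : Type*} [CommRing A] [Ring R] [Algebra A R] {d : A} {n : ℕ} {β : ℕ → R}

theorem isReducible_or_isNormal_flat_cons (hβ : IsUiFamily d n β) (hd : IsSMulRegular R d)
    {a b : ℕ} (hab : a < b) {L : List (ℕ × ℕ)} (hL : IsNormalList L)
    (hLa : ∀ p ∈ L.head?, p.1 ≤ a) (hLn : ∀ p ∈ L, p.2 ≤ n) :
    IsReducible A β (flat ((a, b) :: L)) ∨ IsNormal (flat ((a, b) :: L)) := by
  rcases L with _ | ⟨⟨c, e⟩, L⟩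
  · exact .inr ⟨_, isNormalList_nil.cons hab (by simp), rfl⟩
  by_cases hle : toLex (c, e) ≤ toLex (a, b)
  · exact .inr ⟨_, hL.cons_cons hab hle, rfl⟩
  obtain ⟨rfl, hbe⟩ : c = a ∧ b < e := by
    have : c ≤ a := hLa (c, e) rfl
    rw [Prod.Lex.toLex_le_toLex] at hle
    omega
  left
  have hred := hβ.isReducible_segment_append_segment hd hab hbe (hLn (c, e) (by simp))
  simpa [flat_cons] using hred.append [] (flat L)

theorem isReducible_or_isNormal_flat_cons_pred (hβ : IsUiFamily d n β) (hd : IsSMulRegular R d)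
    {i b : ℕ} {L : List (ℕ × ℕ)} (hL : IsNormalList ((i + 1, b) :: L))
    (hLn : ∀ p ∈ (i + 1, b) :: L, p.2 ≤ n) :
    IsReducible A β (flat ((i, b) :: L)) ∨ IsNormal (flat ((i, b) :: L)) := by
  have hib : i + 1 < b := hL.fst_lt_snd (i + 1, b) (by simp)
  obtain ⟨hbn, hLn⟩ := List.forall_mem_cons.1 hLn
  by_cases hLi : ∀ p ∈ L.head?, p.1 ≤ i
  · exact hβ.isReducible_or_isNormal_flat_cons hd (by omega) hL.of_cons hLi hLn
  rcases L with _ | ⟨⟨c, e⟩, L⟩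
  · simp at hLi
  have hic : i < c := by simpa using hLi
  have hce : c < e := hL.fst_lt_snd (c, e) (by simp)
  obtain rfl : c = i + 1 := by
    have := List.rel_of_pairwise_cons hL.pairwise (List.mem_cons_self ..)
    rw [Prod.Lex.toLex_le_toLex] at this
    omega
  left
  have hred := hβ.isReducible_segment_append_second hd hib hbn
  simpa [flat_cons, List.Ico.eq_cons hce] using
    hred.append [] (List.Ico (i + 1 + 1) e ++ flat L)

theorem isReducible_or_isNormal_cons_flat (hβ : IsUiFamily d n β) (hd : IsSMulRegular R d)
    {i : ℕ} {L : List (ℕ × ℕ)} (hL : IsNormalList L) (hLn : ∀ p ∈ L, p.2 ≤ n) :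
    IsReducible A β (i :: flat L) ∨ IsNormal (i :: flat L) := by
  by_cases hLi : ∀ p ∈ L.head?, p.1 ≤ i
  · rw [← flat_cons_succ]
    exact hβ.isReducible_or_isNormal_flat_cons hd i.lt_succ_self hL hLi hLn
  rcases L with _ | ⟨⟨a, b⟩, L⟩
  · simp at hLi
  have hia : i < a := by simpa using hLi
  have hab : a < b := hL.fst_lt_snd (a, b) (by simp)
  have hbn : b ≤ n := hLn (a, b) (by simp)
  rcases Nat.lt_or_ge (i + 1) a with hia' | hia'
  · left
    have hred := hβ.isReducible_pair (A := A) hia' (by omega)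
    simpa [flat_cons_eq_cons hab] using hred.append [] (flat ((a + 1, b) :: L))
  · obtain rfl : a = i + 1 := by omega
    rw [← flat_cons_eq_cons (by omega)]
    exact hβ.isReducible_or_isNormal_flat_cons_pred hd hL hLn

theorem isReducible_or_isNormal (hβ : IsUiFamily d n β) (hd : IsSMulRegular R d) {w : List ℕ}
    (hw : ∀ c ∈ w, c < n) : IsReducible A β w ∨ IsNormal w := by
  induction w with
  | nil => exact .inr ⟨[], isNormalList_nil, rfl⟩
  | cons i w ih =>
    obtain ⟨-, hw⟩ := List.forall_mem_cons.1 hw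
    rcases ih hw with h | ⟨L, hL, rfl⟩
    · left
      simpa using h.append [i] []
    · exact hβ.isReducible_or_isNormal_cons_flat hd hL fun p hp => hL.snd_le hw hp

end IsUiFamily

/-! ### The action on tensor powers of the natural representation -/

section Representation

variable {K : Type*} [Field K] (q : K)

/-- The scalar by which the torus element `K_i` in the coproduct `B_i ↦ K_i ⊗ B_i + B_i ⊗ 1` acts on
the basis vector `e_x` of the natural representation. -/
def torusWeight (i x : ℕ) : K := if x = i then q⁻¹ else if x = i + 1 then q else 1

/-- A list of natural numbers is read as a pure tensor of basis vectors `e_x`, so that functions on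
lists are (infinite) combinations of pure tensors. `slice x` extracts the part of such a combination
with first tensor factor `e_x`. -/
def slice (x : ℕ) : (List ℕ → K) →ₗ[K] (List ℕ → K) := LinearMap.funLeft K K (x :: ·)

/-- The part with first tensor factor `e_x` of the result of exchanging `e_i` and `e_{i+1}` in the
first tensor factor and killing the other basis vectors. -/
def swapFactor (i x : ℕ) : (List ℕ → K) →ₗ[K] (List ℕ → K) :=
  if x = i then slice (i + 1) else if x = i + 1 then slice i else 0

/-- The coefficient at a list of the result of applying `B_i`, by recursion on the tensor factors
according to the coproduct `B_i ↦ K_i ⊗ B_i + B_i ⊗ 1`. -/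
def opCoeff (i : ℕ) : List ℕ → (List ℕ → K) →ₗ[K] K
  | [] => 0
  | x :: t => torusWeight q i x • opCoeff i t ∘ₗ slice x + LinearMap.proj t ∘ₗ swapFactor i x

/-- The operator by which `B_i` acts on combinations of pure tensors. -/
def op (i : ℕ) : Module.End K (List ℕ → K) := LinearMap.pi (opCoeff q i)

variable {q}

theorem op_nil (i : ℕ) (f : List ℕ → K) : op q i f [] = 0 := rfl

theorem op_cons (i x : ℕ) (t : List ℕ) (f : List ℕ → K) :
    op q i f (x :: t) = torusWeight q i x * op q i (slice x f) t + swapFactor i x f t := rfl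

theorem slice_apply (x : ℕ) (f : List ℕ → K) (t : List ℕ) : slice x f t = f (x :: t) := rfl

theorem slice_op (i x : ℕ) (f : List ℕ → K) :
    slice x (op q i f) = torusWeight q i x • op q i (slice x f) + swapFactor i x f := rfl

theorem slice_op_self (i : ℕ) (f : List ℕ → K) :
    slice i (op q i f) = q⁻¹ • op q i (slice i f) + slice (i + 1) f := by
  simp [slice_op, torusWeight, swapFactor]

theorem slice_op_succ (i : ℕ) (f : List ℕ → K) :
    slice (i + 1) (op q i f) = q • op q i (slice (i + 1) f) + slice i f := by
  simp [slice_op, torusWeight, swapFactor]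

theorem slice_op_of_ne {i x : ℕ} (h : x ≠ i) (h' : x ≠ i + 1) (f : List ℕ → K) :
    slice x (op q i f) = op q i (slice x f) := by
  simp [slice_op, torusWeight, swapFactor, h, h']

theorem commute_op {i j : ℕ} (hij : i + 1 < j) : Commute (op q i) (op q j) := by
  suffices ∀ (t : List ℕ) (f : List ℕ → K), op q i (op q j f) t = op q j (op q i f) t from
    LinearMap.ext fun f => funext fun t => this t f
  intro t
  induction t with
  | nil => exact fun _ => rfl
  | cons x t ih =>
    intro f
    simp only [← slice_apply x]
    by_cases hxi : x = i ∨ x = i + 1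
    · have hslice (y : ℕ) (hy : y = i ∨ y = i + 1) (f : List ℕ → K) :
          slice y (op q j f) = op q j (slice y f) := slice_op_of_ne (by omega) (by omega) f
      rcases hxi with rfl | rfl <;> simp [slice_op_self, slice_op_succ, hslice, ih]
    by_cases hxj : x = j ∨ x = j + 1
    · have hslice (y : ℕ) (hy : y = j ∨ y = j + 1) (f : List ℕ → K) :
          slice y (op q i f) = op q i (slice y f) := slice_op_of_ne (by omega) (by omega) f
      rcases hxj with rfl | rfl <;> simp [slice_op_self, slice_op_succ, hslice, ih]
    push Not at hxi hxj
    simp only [slice_op_of_ne hxi.1 hxi.2, slice_op_of_ne hxj.1 hxj.2, ih]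

theorem op_serre_apply (hq : q ≠ 0) {i j : ℕ} (hij : i + 1 = j ∨ j + 1 = i) (t : List ℕ)
    (f : List ℕ → K) :
    op q i (op q i (op q j f)) t + op q j (op q i (op q i f)) t =
      (q + q⁻¹) * op q i (op q j (op q i f)) t + op q j f t := by
  induction t generalizing f with
  | nil => simp [op_nil]
  | cons x t ih =>
    have ih := ih (slice x f)
    simp only [← slice_apply x]
    by_cases hx : (x = i ∨ x = i + 1) ∨ x = j ∨ x = j + 1
    · have hlow (k : ℕ) := slice_op_of_ne (q := q) (by omega : k ≠ k + 1) (by omega)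
      have hhigh (k : ℕ) := slice_op_of_ne (q := q) (by omega : k + 1 + 1 ≠ k) (by omega)
      rcases hij with rfl | rfl <;> rcases hx with (rfl | rfl) | rfl | rfl <;>
        simp only [slice_op_self, slice_op_succ, hlow, hhigh, map_add, map_smul, Pi.add_apply,
          Pi.smul_apply, smul_eq_mul] at ih ⊢ <;>
        grind
    push Not at hx
    obtain ⟨⟨hxi, hxi'⟩, hxj, hxj'⟩ := hx
    simpa only [slice_op_of_ne hxi hxi', slice_op_of_ne hxj hxj'] using ih

theorem serreRel_op (hq : q ≠ 0) {i j : ℕ} (hij : i + 1 = j ∨ j + 1 = i) :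
    SerreRel (q + q⁻¹) (op q i) (op q j) :=
  LinearMap.ext fun f => funext fun t => op_serre_apply hq hij t f

end Representation

/-! ### Matrix coefficients and lattice paths -/

/-- `Step i t s`: the list `s` arises from `t` by changing one entry `i` to `i + 1` or one entry
`i + 1` to `i`. These are the pairs of lists between which, for `q > 0`, the operator `op q i` has a
nonzero matrix coefficient. -/
inductive Step (i : ℕ) : List ℕ → List ℕ → Prop
  | up (t : List ℕ) : Step i (i :: t) ((i + 1) :: t)
  | down (t : List ℕ) : Step i ((i + 1) :: t) (i :: t)
  | cons (x : ℕ) {t s : List ℕ} (h : Step i t s) : Step i (x :: t) (x :: s)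

/-- `Path w t e`: the list `e` is reached from `t` by steps labelled by the successive letters of
`w`. -/
inductive Path : List ℕ → List ℕ → List ℕ → Prop
  | nil (t : List ℕ) : Path [] t t
  | cons {i : ℕ} {w t t' e : List ℕ} (h : Step i t t') (hw : Path w t' e) : Path (i :: w) t e

theorem Step.exists_of_op_apply_ne_zero {K : Type*} [Field K] {q : K} {i : ℕ} {t : List ℕ}
    {f : List ℕ → K} (h : op q i f t ≠ 0) : ∃ t', Step i t t' ∧ f t' ≠ 0 := by
  induction t generalizing f with
  | nil => exact absurd rfl h
  | cons x t ih =>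
    rw [op_cons] at h
    by_cases h0 : op q i (slice x f) t = 0
    · rw [h0, mul_zero, zero_add, swapFactor] at h
      split_ifs at h with hx hx
      · subst hx
        exact ⟨_, .up t, h⟩
      · subst hx
        exact ⟨_, .down t, h⟩
      · exact absurd rfl h
    · obtain ⟨t', hs, hf⟩ := ih h0
      exact ⟨x :: t', hs.cons x, hf⟩

theorem Path.of_wordProd_op_apply_ne_zero {K : Type*} [Field K] {q : K} {w t e : List ℕ}
    (h : wordProd (op q) w (Pi.single e 1) t ≠ 0) : Path w t e := by
  induction w generalizing t with
  | nil =>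
    obtain rfl : t = e := by_contra fun hte => h (Pi.single_eq_of_ne hte 1)
    exact .nil t
  | cons i w ih =>
    rw [wordProd_cons] at h
    obtain ⟨t', hs, ht'⟩ := Step.exists_of_op_apply_ne_zero h
    exact .cons hs (ih ht')

section Positivity

theorem slice_nonneg {K : Type*} [Field K] [Preorder K] (x : ℕ) {f : List ℕ → K} (hf : 0 ≤ f) :
    0 ≤ slice x f :=
  fun t => hf (x :: t)

theorem swapFactor_nonneg {K : Type*} [Field K] [Preorder K] (i x : ℕ) {f : List ℕ → K}
    (hf : 0 ≤ f) : 0 ≤ swapFactor i x f := by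
  unfold swapFactor
  split_ifs
  · exact slice_nonneg _ hf
  · exact slice_nonneg _ hf
  · exact le_rfl

variable {K : Type*} [Field K] [LinearOrder K] [IsStrictOrderedRing K] {q : K}

theorem torusWeight_pos (hq : 0 < q) (i x : ℕ) : 0 < torusWeight q i x := by
  unfold torusWeight
  split_ifs <;> positivity

theorem op_nonneg (hq : 0 < q) (i : ℕ) {f : List ℕ → K} (hf : 0 ≤ f) : 0 ≤ op q i f := by
  intro t
  induction t generalizing f with
  | nil => exact le_rfl
  | cons x t ih =>
    rw [op_cons]
    exact add_nonneg (mul_nonneg (torusWeight_pos hq i x).le (ih (slice_nonneg x hf)))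
      (swapFactor_nonneg i x hf t)

theorem Step.op_apply_pos (hq : 0 < q) {i : ℕ} {t t' : List ℕ} (h : Step i t t')
    {f : List ℕ → K} (hf : 0 ≤ f) (hft' : 0 < f t') : 0 < op q i f t := by
  induction h generalizing f with
  | up t | down t =>
    rw [op_cons]
    refine add_pos_of_nonneg_of_pos
      (mul_nonneg (torusWeight_pos hq i _).le (op_nonneg hq i (slice_nonneg _ hf) t)) ?_
    simpa [swapFactor, slice_apply] using hft'
  | cons x _ ih =>
    rw [op_cons]
    exact add_pos_of_pos_of_nonneg (mul_pos (torusWeight_pos hq i x) (ih (slice_nonneg x hf) hft'))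
      (swapFactor_nonneg i x hf _)

theorem wordProd_op_nonneg (hq : 0 < q) (w : List ℕ) {f : List ℕ → K} (hf : 0 ≤ f) :
    0 ≤ wordProd (op q) w f := by
  induction w with
  | nil => exact hf
  | cons i w ih =>
    rw [wordProd_cons]
    exact op_nonneg hq i ih

theorem Path.wordProd_op_apply_pos (hq : 0 < q) {w t e : List ℕ} (h : Path w t e) :
    0 < wordProd (op q) w (Pi.single e 1) t := by
  induction h with
  | nil t => simp [wordProd]
  | cons hs _ ih =>
    rw [wordProd_cons]
    exact hs.op_apply_pos hq (wordProd_op_nonneg hq _ (Pi.single_nonneg.2 zero_le_one)) ih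

end Positivity

theorem Step.length_eq {i : ℕ} {t t' : List ℕ} (h : Step i t t') : t'.length = t.length := by
  induction h with
  | up | down => rfl
  | cons x _ ih => simp [ih]

theorem Step.sum_le {i : ℕ} {t t' : List ℕ} (h : Step i t t') : t'.sum ≤ t.sum + 1 := by
  induction h <;> simp only [List.sum_cons] <;> omega

theorem Path.length_eq {w t e : List ℕ} (h : Path w t e) : e.length = t.length := by
  induction h with
  | nil => rfl
  | cons hs _ ih => rw [ih, hs.length_eq]

theorem Path.sum_le {w t e : List ℕ} (h : Path w t e) : e.sum ≤ t.sum + w.length := by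
  induction h with
  | nil => exact le_rfl
  | cons hs _ ih =>
    have := hs.sum_le
    rw [List.length_cons]
    omega

theorem Path.append {u w t s e : List ℕ} (h : Path u t s) (h' : Path w s e) :
    Path (u ++ w) t e := by
  induction h with
  | nil => exact h'
  | cons hs _ ih => exact .cons hs (ih h')

theorem Path.cons_cons {w t e : List ℕ} (h : Path w t e) (x : ℕ) : Path w (x :: t) (x :: e) := by
  induction h with
  | nil t => exact .nil (x :: t)
  | cons hs _ ih => exact .cons (hs.cons x) ih

theorem Path.segment {a b : ℕ} (hab : a ≤ b) (t : List ℕ) :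
    Path (List.Ico a b) (a :: t) (b :: t) := by
  induction hab using Nat.decreasingInduction with
  | of_succ a hab ih =>
    rw [List.Ico.eq_cons hab]
    exact .cons (.up t) ih
  | self =>
    rw [List.Ico.self_empty]
    exact .nil _

theorem Path.flat {L : List (ℕ × ℕ)} (hL : ∀ p ∈ L, p.1 ≤ p.2) :
    Path (flat L) (L.map Prod.fst) (L.map Prod.snd) := by
  induction L with
  | nil => exact .nil []
  | cons p L ih =>
    obtain ⟨hp, hL⟩ := List.forall_mem_cons.1 hL
    rw [flat_cons]
    exact (Path.segment hp _).append ((ih hL).cons_cons p.2)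

theorem sum_map_snd_eq {L : List (ℕ × ℕ)} (hL : ∀ p ∈ L, p.1 ≤ p.2) :
    (L.map Prod.snd).sum = (L.map Prod.fst).sum + (flat L).length := by
  induction L with
  | nil => rfl
  | cons p L ih =>
    obtain ⟨hp, hL⟩ := List.forall_mem_cons.1 hL
    have := ih hL
    simp only [List.map_cons, List.sum_cons, flat_cons, List.length_append, List.Ico.length]
    omega

/-! ### Shuffles of segments -/

/-- The word `w` is a shuffle of the segments `a, …, b - 1` over the pairs `(a, b)` in `S`: each
letter of `w` removes the first letter of one of the segments. -/
inductive IsShuffle : List ℕ → Multiset (ℕ × ℕ) → Prop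
  | nil {S : Multiset (ℕ × ℕ)} (h : ∀ p ∈ S, p.1 = p.2) : IsShuffle [] S
  | cons {a b : ℕ} {w : List ℕ} {S : Multiset (ℕ × ℕ)} (h : IsShuffle w ((a + 1, b) ::ₘ S)) :
      IsShuffle (a :: w) ((a, b) ::ₘ S)

theorem IsShuffle.fst_le_snd {w : List ℕ} {S : Multiset (ℕ × ℕ)} (h : IsShuffle w S) :
    ∀ p ∈ S, p.1 ≤ p.2 := by
  induction h with
  | nil h => exact fun p hp => (h p hp).le
  | cons _ ih =>
    obtain ⟨hp, hS⟩ := Multiset.forall_mem_cons.1 ih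
    exact Multiset.forall_mem_cons.2 ⟨(Nat.le_succ _).trans hp, hS⟩

theorem Step.exists_zip_eq_cons {i : ℕ} {t t' e : List ℕ} (h : Step i t t')
    (hsum : t'.sum = t.sum + 1) (hlen : e.length = t.length) :
    ∃ (b : ℕ) (S : Multiset (ℕ × ℕ)), (t.zip e : Multiset (ℕ × ℕ)) = (i, b) ::ₘ S ∧
      (t'.zip e : Multiset (ℕ × ℕ)) = (i + 1, b) ::ₘ S := by
  rcases e with _ | ⟨b, e⟩
  · cases h <;> simp at hlen
  induction h generalizing b e with
  | up t => exact ⟨b, t.zip e, rfl, rfl⟩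
  | down t =>
    simp only [List.sum_cons] at hsum
    omega
  | @cons x t t' h ih =>
    rcases e with _ | ⟨c, e⟩
    · cases h <;> simp at hlen
    obtain ⟨a, S, ht, ht'⟩ :=
      ih (by simpa [add_assoc] using hsum) c e (by simpa using hlen)
    refine ⟨a, (x, b) ::ₘ S, ?_, ?_⟩
    · rw [List.zip_cons_cons, ← Multiset.cons_coe, ht, Multiset.cons_swap]
    · rw [List.zip_cons_cons, ← Multiset.cons_coe, ht', Multiset.cons_swap]

/-- Each letter increases the sum of the entries by at most one, so under the hypothesis `h` no step
goes down. -/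
theorem Path.isShuffle {w t e : List ℕ} (hw : Path w t e) (h : e.sum = t.sum + w.length) :
    IsShuffle w (t.zip e : List (ℕ × ℕ)) := by
  induction hw with
  | nil t =>
    refine .nil fun p hp => ?_
    obtain ⟨k, _, rfl⟩ := List.mem_iff_getElem.1 (Multiset.mem_coe.1 hp)
    simp
  | cons hs hw ih =>
    have := hs.sum_le
    have := hw.sum_le
    rw [List.length_cons] at h
    obtain ⟨b, S, ht, ht'⟩ :=
      hs.exists_zip_eq_cons (by omega) (by rw [hw.length_eq, hs.length_eq])
    rw [ht]
    exact .cons (ht' ▸ ih (by omega))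

theorem flat_cons_erase_le {L : List (ℕ × ℕ)} (hL : IsNormalList L) {p : ℕ × ℕ} (hp : p ∈ L)
    (hmax : ∀ r ∈ L, r.1 ≤ p.1) : flat (p :: L.erase p) ≤ flat L := by
  rcases L with _ | ⟨r, L⟩
  · simp at hp
  obtain rfl | ⟨hpr, hpL⟩ := List.eq_or_ne_mem_of_mem hp
  · rw [List.erase_cons_head]
  obtain ⟨a, b⟩ := p
  obtain ⟨c, e⟩ := r
  have hab : a < b := hL.fst_lt_snd (a, b) hp
  obtain ⟨rfl, hbe⟩ : c = a ∧ b < e := by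
    have hle := List.rel_of_pairwise_cons hL.pairwise hpL
    have hca : c ≤ a := hmax (c, e) (by simp)
    rw [Prod.Lex.toLex_le_toLex] at hle
    simp only [ne_eq, Prod.mk.injEq] at hpr
    omega
  rw [List.erase_cons_tail (by simpa using hpr.symm), flat_cons, flat_cons, flat_cons,
    ← List.Ico.append_consecutive hab.le hbe.le, List.append_assoc, List.append_assoc]
  refine (List.append_left_lt ?_).le
  rw [List.Ico.eq_cons hbe, List.Ico.eq_cons hab]
  exact List.Lex.rel hab

theorem cons_lt_flat {L : List (ℕ × ℕ)} (hL : IsNormalList L) {p : ℕ × ℕ} (hp : p ∈ L) {a : ℕ}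
    (hap : a < p.1) (w : List ℕ) : a :: w < flat L := by
  rcases L with _ | ⟨⟨c, e⟩, L⟩
  · simp at hp
  have hpc : p.1 ≤ c := by
    rcases List.mem_cons.1 hp with rfl | hp
    · exact le_rfl
    · have := List.rel_of_pairwise_cons hL.pairwise hp
      rw [Prod.Lex.toLex_le_toLex] at this
      omega
  rw [flat_cons_eq_cons (hL.fst_lt_snd (c, e) (by simp))]
  exact List.Lex.rel (by omega)

theorem IsNormalList.exists_flat_cons_succ {a b : ℕ} {L : List (ℕ × ℕ)} {S : Multiset (ℕ × ℕ)}
    (hL : IsNormalList L) (hLS : (L : Multiset (ℕ × ℕ)) = S.filter fun p => p.1 < p.2)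
    (hmax : ∀ p ∈ L, p.1 ≤ a) :
    ∃ M, IsNormalList M ∧ flat M = flat ((a + 1, b) :: L) ∧
      (M : Multiset (ℕ × ℕ)) = ((a + 1, b) ::ₘ S).filter fun p => p.1 < p.2 := by
  rcases Nat.lt_or_ge (a + 1) b with hb | hb
  · refine ⟨(a + 1, b) :: L, hL.cons hb fun p hp => ?_, rfl, ?_⟩
    · rw [Prod.Lex.toLex_le_toLex]
      exact .inl (Nat.lt_succ_of_le (hmax p hp))
    · rw [Multiset.filter_cons_of_pos (p := fun p : ℕ × ℕ => p.1 < p.2) _ hb, ← hLS,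
        Multiset.cons_coe]
  · refine ⟨L, hL, (flat_cons_of_le hb L).symm, ?_⟩
    rw [Multiset.filter_cons_of_neg (p := fun p : ℕ × ℕ => p.1 < p.2) _ hb.not_gt, hLS]

theorem IsShuffle.le_flat {w : List ℕ} {S : Multiset (ℕ × ℕ)} (h : IsShuffle w S)
    {L : List (ℕ × ℕ)} (hL : IsNormalList L)
    (hLS : (L : Multiset (ℕ × ℕ)) = S.filter fun p => p.1 < p.2) : w ≤ flat L := by
  induction h generalizing L with
  | nil => exact not_lt.1 (List.not_lt_nil _)
  | @cons a b w S h ih =>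
    have hab : a < b := h.fst_le_snd _ (Multiset.mem_cons_self _ _)
    rw [Multiset.filter_cons_of_pos (p := fun p : ℕ × ℕ => p.1 < p.2) _ hab] at hLS
    have hmem : (a, b) ∈ L := by simp [← Multiset.mem_coe, hLS]
    by_cases! hmax : ∃ p ∈ L, a < p.1
    · obtain ⟨p, hp, hap⟩ := hmax
      exact (cons_lt_flat hL hp hap w).le
    have hLS' : (L.erase (a, b) : Multiset (ℕ × ℕ)) = S.filter fun p => p.1 < p.2 := by
      rw [← Multiset.cons_inj_right (a, b), ← hLS]
      exact (Multiset.coe_eq_coe.2 (List.perm_cons_erase hmem)).symm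
    obtain ⟨M, hM, hflat, hMS⟩ := (hL.sublist List.erase_sublist).exists_flat_cons_succ (b := b)
      hLS' fun p hp => hmax p (List.mem_of_mem_erase hp)
    calc a :: w ≤ a :: flat M := List.cons_le_cons a (ih hM hMS)
      _ = flat ((a, b) :: L.erase (a, b)) := by rw [hflat, ← flat_cons_eq_cons hab]
      _ ≤ flat L := flat_cons_erase_le hL hmem hmax

theorem not_path_of_prec {L : List (ℕ × ℕ)} (hL : IsNormalList L) {w : List ℕ}
    (hw : Prec w (flat L)) : ¬ Path w (L.map Prod.fst) (L.map Prod.snd) := by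
  intro hpath
  have hsum := sum_map_snd_eq fun p hp => (hL.fst_lt_snd p hp).le
  rcases hw with hlen | ⟨hlen, hlt⟩
  · have := hpath.sum_le
    omega
  · refine (hpath.isShuffle (by omega)).le_flat hL ?_ |>.not_gt hlt
    rw [List.zip_map', List.map_id', eq_comm, Multiset.filter_eq_self]
    exact hL.fst_lt_snd

/-! ### The representation and the good words of `U^ı(sl_{n+1})` -/

section Good

variable {n : ℕ}

theorem exists_ringHom_ratFunc_of_transcendental {K L : Type*} [Field K] [Field L] [Algebra K L]
    {x : L} (hx : Transcendental K x) : ∃ φ : RatFunc K →+* L, φ RatFunc.X = x :=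
  ⟨(algebraMap _ L).comp (RatFunc.algEquivOfTranscendental x hx).toRingEquiv.toRingHom,
    RatFunc.algEquivOfTranscendental_X x hx⟩

theorem exists_ringHom_ratFunc_real_pos : ∃ φ : RatFunc ℚ →+* ℝ, 0 < φ RatFunc.X := by
  have htr : Transcendental ℚ (liouvilleNumber (2 : ℕ)) :=
    mt (IsFractionRing.isAlgebraic_iff ℤ ℚ ℝ).2 (transcendental_liouvilleNumber le_rfl)
  obtain ⟨φ, hφ⟩ := exists_ringHom_ratFunc_of_transcendental htr
  refine ⟨φ, ?_⟩
  rw [hφ]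
  exact (LiouvilleNumber.summable (by norm_num)).tsum_pos (fun i => by positivity) 0
    (by positivity)

/-- The representation of `U^ı(sl_{n+1})` in which `B_i` acts by `op q i`, where `q` is the image of
the variable in a field extension `K` of `ℚ(q)`. -/
noncomputable def rep (K : Type*) [Field K] [Algebra (RatFunc ℚ) K] (n : ℕ) :
    Ui n →ₐ[RatFunc ℚ] Module.End K (List ℕ → K) :=
  RingQuot.liftAlgHom (RatFunc ℚ)
    ⟨FreeAlgebra.lift (RatFunc ℚ) fun i : Fin n => op (algebraMap (RatFunc ℚ) K RatFunc.X) i, by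
      intro x y h
      cases h with
      | comm i j hij =>
        simpa only [map_mul, FreeAlgebra.lift_ι_apply] using (commute_op hij).eq
      | serre i j hij =>
        have hq : algebraMap (RatFunc ℚ) K RatFunc.X ≠ 0 := by simp [RatFunc.X_ne_zero]
        have h := serreRel_op hq hij
        simp only [map_mul, map_add, map_smul, FreeAlgebra.lift_ι_apply]
        rw [← algebraMap_smul K (RatFunc.X + RatFunc.X⁻¹ : RatFunc ℚ), map_add, map_inv₀]
        exact h⟩

theorem rep_Bword (K : Type*) [Field K] [Algebra (RatFunc ℚ) K] (w : List (Fin n)) :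
    rep K n (Bword (Bgen n) w) =
      wordProd (op (algebraMap (RatFunc ℚ) K RatFunc.X)) (w.map Fin.val) := by
  rw [Bword, wordProd, map_list_prod, List.map_map, List.map_map]
  congr 2
  funext i
  simp [rep, Bgen]

theorem isGood_of_isNormal {g : List (Fin n)} (hg : IsNormal (g.map Fin.val)) :
    IsGood (RatFunc ℚ) (Bgen n) g := by
  obtain ⟨L, hL, hLg⟩ := hg
  obtain ⟨φ, hφ⟩ := exists_ringHom_ratFunc_real_pos
  let _ : Algebra (RatFunc ℚ) ℝ := φ.toAlgebra
  let coeff : Ui n →ₗ[RatFunc ℚ] ℝ :=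
    LinearMap.proj (L.map Prod.fst) ∘ₗ
      LinearMap.applyₗ' (RatFunc ℚ) (Pi.single (L.map Prod.snd) 1) ∘ₗ (rep ℝ n).toLinearMap
  have hcoeff (w : List (Fin n)) : coeff (Bword (Bgen n) w) =
      wordProd (op (φ RatFunc.X)) (w.map Fin.val) (Pi.single (L.map Prod.snd) 1)
        (L.map Prod.fst) :=
    congrFun (LinearMap.congr_fun (rep_Bword ℝ w) _) _
  have hker : Submodule.span (RatFunc ℚ) (Bword (Bgen n) '' {w | PrecLt w g}) ≤
      LinearMap.ker coeff := by
    refine Submodule.span_le.2 ?_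
    rintro _ ⟨w, hw, rfl⟩
    rw [SetLike.mem_coe, LinearMap.mem_ker, hcoeff]
    by_contra hne
    exact not_path_of_prec hL (hLg ▸ (prec_map_iff Fin.val_strictMono).2 hw)
      (Path.of_wordProd_op_apply_ne_zero hne)
  intro hmem
  have hpos := (Path.flat fun p hp => (hL.fst_lt_snd p hp).le).wordProd_op_apply_pos hφ
  rw [hLg, ← hcoeff, LinearMap.mem_ker.1 (hker hmem)] at hpos
  exact hpos.false

end Good

/-! ### Integral reduction to good words -/

section Integral

variable {n : ℕ}

/-- The element `q + q⁻¹` of `ℤ[q, q⁻¹]`. -/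
noncomputable def qTwo : LaurentInt :=
  ⟨RatFunc.X + RatFunc.X⁻¹, add_mem (Subring.subset_closure (by simp))
    (Subring.subset_closure (by simp))⟩

theorem isSMulRegular_qTwo : IsSMulRegular (Ui n) qTwo := by
  obtain ⟨φ, hφ⟩ := exists_ringHom_ratFunc_real_pos
  have hne : (RatFunc.X + RatFunc.X⁻¹ : RatFunc ℚ) ≠ 0 := by
    refine ne_zero_of_map (f := φ) ?_
    rw [map_add, map_inv₀]
    positivity
  exact fun x y hxy => smul_right_injective (Ui n) hne hxy

/-- The generators of `U^ı(sl_{n+1})` as a family indexed by `ℕ`, extended by zero. -/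
noncomputable def genNat (n : ℕ) : ℕ → Ui n := Function.extend Fin.val (Bgen n) 0

theorem genNat_val (i : Fin n) : genNat n i = Bgen n i :=
  Fin.val_injective.extend_apply _ _ i

theorem genNat_of_le {i : ℕ} (hi : n ≤ i) : genNat n i = 0 :=
  Function.extend_apply' _ _ _ fun ⟨j, hj⟩ => (hj ▸ j.isLt).not_ge hi

theorem commute_Bgen {i j : Fin n} (hij : (i : ℕ) + 1 < j) :
    Commute (Bgen n i) (Bgen n j) := by
  simpa only [map_mul, commute_iff_eq, Bgen] using
    RingQuot.mkAlgHom_rel (RatFunc ℚ) (UiRel.comm i j hij)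

theorem serreRel_Bgen {i j : Fin n} (hij : (i : ℕ) + 1 = j ∨ (j : ℕ) + 1 = i) :
    SerreRel (RatFunc.X + RatFunc.X⁻¹ : RatFunc ℚ) (Bgen n i) (Bgen n j) := by
  simpa only [map_mul, map_add, map_smul, SerreRel, Bgen] using
    RingQuot.mkAlgHom_rel (RatFunc ℚ) (UiRel.serre i j hij)

theorem isUiFamily_genNat (n : ℕ) : IsUiFamily qTwo n (genNat n) where
  commute {i j} hij hj := by
    have hi : i < n := by omega
    have h : Commute (Bgen n ⟨i, hi⟩) (Bgen n ⟨j, hj⟩) := commute_Bgen hij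
    rwa [← genNat_val, ← genNat_val] at h
  serre {i j} hi hj hij := by
    have h := serreRel_Bgen (i := ⟨i, hi⟩) (j := ⟨j, hj⟩) hij
    rw [← genNat_val, ← genNat_val] at h
    exact h

theorem wordProd_genNat_map_val (w : List (Fin n)) :
    wordProd (genNat n) (w.map Fin.val) = Bword (Bgen n) w := by
  rw [wordProd, Bword, List.map_map, ← funext genNat_val]
  rfl

theorem wordProd_genNat_eq_zero_or (w : List ℕ) :
    wordProd (genNat n) w = 0 ∨ ∃ v : List (Fin n), v.map Fin.val = w := by
  by_cases! hw : ∃ c ∈ w, n ≤ c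
  · obtain ⟨c, hc, hnc⟩ := hw
    exact .inl (List.prod_eq_zero (List.mem_map.2 ⟨c, hc, genNat_of_le hnc⟩))
  · exact .inr ⟨w.pmap Fin.mk hw, by simp [List.map_pmap]⟩

theorem Bword_mem_span_of_isReducible {w : List (Fin n)}
    (h : IsReducible LaurentInt (genNat n) (w.map Fin.val)) :
    Bword (Bgen n) w ∈ Submodule.span LaurentInt (Bword (Bgen n) '' {u | PrecLt u w}) := by
  rw [IsReducible, wordProd_genNat_map_val] at h
  refine (Submodule.span_le.2 ?_ : wordSpan _ _ _ ≤ _) h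
  rintro _ ⟨u, hu, rfl⟩
  rcases wordProd_genNat_eq_zero_or (n := n) u with h0 | ⟨v, rfl⟩
  · rw [h0]
    exact zero_mem _
  · rw [wordProd_genNat_map_val]
    exact Submodule.subset_span ⟨v, (prec_map_iff Fin.val_strictMono).1 hu, rfl⟩

theorem Bword_mem_span_isGood (w : List (Fin n)) :
    Bword (Bgen n) w ∈ Submodule.span LaurentInt
      (Bword (Bgen n) '' {g | IsGood (RatFunc ℚ) (Bgen n) g ∧ PrecLe g w}) := by
  refine mem_span_image_of_wellFounded wellFounded_prec Prec.trans (fun w => ?_) w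
  exact ((isUiFamily_genNat n).isReducible_or_isNormal isSMulRegular_qTwo (by simp)).imp
    Bword_mem_span_of_isReducible isGood_of_isNormal

end Integral

end Ui

/-- The split ıquantum group `U^ı(sl_{n+1})` satisfies the integral condition (IC) : every word
is integral. -/
theorem Ui_satisfies_IC {n : ℕ} (w : List (Fin n)) : IsIntegralWord (Bgen n) w := by
  obtain ⟨c, hc, hw⟩ := (Finsupp.mem_span_image_iff_linearCombination LaurentInt).1
    (Ui.Bword_mem_span_isGood w)
  refine ⟨c.support, fun g => c g, fun g hg => hc hg, fun g _ => (c g).2, ?_⟩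
  rw [← hw, Finsupp.linearCombination_apply]
  rfl
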